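/- If T is a caterpillar whose spine (the path formed by the non-leaf vertices) contains k ≥ 1 vertices, then the overlap number of T equals k + 2. -/

import Mathlib

/-- Two finite sets overlap: they intersect and neither contains the other. -/
def Overlaps (A B : Finset ℕ) : Prop :=
  (A ∩ B).Nonempty ∧ ¬ A ⊆ B ∧ ¬ B ⊆ A

/-- An overlap representation of a graph: nonempty sets assigned to vertices such that
two vertices are adjacent iff their sets overlap. -/
def IsOverlapRep {V : Type*} (G : SimpleGraph V) (S : V → Finset ℕ) : Prop :=
  (∀ v, (S v).Nonempty) ∧ ∀ u v, G.Adj u v ↔ Overlaps (S u) (S v)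

/-- The overlap number: the minimum number of elements used in an overlap representation. -/
noncomputable def overlapNumber {V : Type*} (G : SimpleGraph V) : ℕ :=
  sInf {n | ∃ S : V → Finset ℕ, IsOverlapRep G S ∧ (⋃ v, (S v : Set ℕ)).ncard = n}

theorem Overlaps.symm' {A B : Finset ℕ} (h : Overlaps A B) : Overlaps B A :=
  ⟨by rw [Finset.inter_comm]; exact h.1, h.2.2, h.2.1⟩

theorem overlaps_iff (A B : Finset ℕ) : Overlaps A B ↔
    (∃ x, x ∈ A ∧ x ∈ B) ∧ (∃ x, x ∈ A ∧ x ∉ B) ∧ (∃ x, x ∈ B ∧ x ∉ A) := by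
  unfold Overlaps
  simp only [Finset.Nonempty, Finset.mem_inter, Finset.not_subset]

theorem Overlaps.three_le {A B U : Finset ℕ} (h : Overlaps A B) (hA : A ⊆ U) (hB : B ⊆ U) :
    3 ≤ U.card := by
  rw [overlaps_iff] at h
  obtain ⟨⟨x, hx1, hx2⟩, ⟨y, hy1, hy2⟩, ⟨z, hz1, hz2⟩⟩ := h
  have h1 : ({x, y, z} : Finset ℕ) ⊆ U := by
    intro t ht
    simp only [Finset.mem_insert, Finset.mem_singleton] at ht
    rcases ht with rfl | rfl | rfl
    · exact hA hx1
    · exact hA hy1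
    · exact hB hz1
  have h2 : ({x, y, z} : Finset ℕ).card = 3 := by
    rw [Finset.card_eq_three]
    refine ⟨x, y, z, ?_, ?_, ?_, rfl⟩
    · rintro rfl; exact hy2 hx2
    · rintro rfl; exact hz2 hx1
    · rintro rfl; exact hy2 hz1
  rw [← h2]; exact Finset.card_le_card h1

/-- Overlap representation of a path on `n` vertices. -/
def PRep (n : ℕ) (A : ℕ → Finset ℕ) : Prop :=
  ∀ i j, i < j → j < n → (Overlaps (A i) (A j) ↔ j = i + 1)

theorem PRep.rev {n : ℕ} {A : ℕ → Finset ℕ} (h : PRep n A) : PRep n (fun i => A (n - 1 - i)) := by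
  intro i j hij hj
  have := h (n - 1 - j) (n - 1 - i) (by omega) (by omega)
  constructor
  · intro h1
    have := this.1 h1.symm'
    omega
  · intro h1
    exact (this.2 (by omega)).symm'

theorem PRep.sub_zero {n : ℕ} {A : ℕ → Finset ℕ} (h : PRep (n + 1) A) (j : ℕ) (hj : j + 2 ≤ n)
    (hs : A j ⊆ A n) : A 0 ⊆ A n := by
  induction j with
  | zero => exact hs
  | succ j ih =>
    apply ih (by omega)
    have h1 := (h j (j + 1) (by omega) (by omega)).2 rfl
    have h2 : ¬ Overlaps (A j) (A n) := fun hh => by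
      have := (h j n (by omega) (by omega)).1 hh
      omega
    by_contra h3
    apply h2
    obtain ⟨x, hx⟩ := h1.1
    rw [Finset.mem_inter] at hx
    exact ⟨⟨x, Finset.mem_inter.2 ⟨hx.1, hs hx.2⟩⟩, h3, fun h4 => h1.2.2 (hs.trans h4)⟩

theorem overlaps_erase_of_twin {A B : Finset ℕ} {x y : ℕ} (hxy : x ≠ y)
    (hA : x ∈ A ↔ y ∈ A) (hB : x ∈ B ↔ y ∈ B) (h : Overlaps A B) :
    Overlaps (A.erase x) (B.erase x) := by
  rw [overlaps_iff] at h ⊢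
  simp only [Finset.mem_erase]
  obtain ⟨⟨a, ha⟩, ⟨b, hb⟩, ⟨c, hc⟩⟩ := h
  refine ⟨?_, ?_, ?_⟩
  · by_cases e : a = x
    · exact ⟨y, by grind⟩
    · exact ⟨a, by grind⟩
  · by_cases e : b = x
    · exact ⟨y, by grind⟩
    · exact ⟨b, by grind⟩
  · by_cases e : c = x
    · exact ⟨y, by grind⟩
    · exact ⟨c, by grind⟩

theorem overlaps_of_erase {A B : Finset ℕ} {x : ℕ}
    (h : Overlaps (A.erase x) (B.erase x)) : Overlaps A B := by
  rw [overlaps_iff] at h ⊢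
  simp only [Finset.mem_erase] at h
  obtain ⟨⟨a, ha⟩, ⟨b, hb⟩, ⟨c, hc⟩⟩ := h
  exact ⟨⟨a, by grind⟩, ⟨b, by grind⟩, ⟨c, by grind⟩⟩

theorem PRep.erase {n : ℕ} {A : ℕ → Finset ℕ} (h : PRep (n + 2) A) {x y : ℕ} (hxy : x ≠ y)
    (ht : ∀ j, j < n → (x ∈ A j ↔ y ∈ A j))
    (hl : Overlaps ((A (n - 1)).erase x) ((A n).erase x)) :
    PRep (n + 1) (fun i => (A i).erase x) := by
  intro i j hij hj
  constructor
  · intro h1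
    exact (h i j hij (by omega)).1 (overlaps_of_erase h1)
  · intro h1
    by_cases e : j = n
    · subst e
      have : i = j - 1 := by omega
      subst this
      exact hl
    · exact overlaps_erase_of_twin hxy (ht i (by omega)) (ht j (by omega))
        ((h i j hij (by omega)).2 h1)

/-- The main step: some element can be erased after dropping the last vertex. -/
theorem PRep.step {n : ℕ} (hn : 2 ≤ n) {A : ℕ → Finset ℕ} (h : PRep (n + 2) A)
    (hns : ¬ A 0 ⊆ A (n + 1)) :
    ∃ x ∈ A (n + 1), PRep (n + 1) (fun i => (A i).erase x) := by
  have hlast := (h n (n + 1) (by omega) (by omega)).2 rfl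
  have hprev := (h (n - 1) n (by omega) (by omega)).2 (by omega)
  have hpp := (h (n - 2) (n - 1) (by omega) (by omega)).2 (by omega)
  have hdich : ∀ j, j < n → A (n + 1) ⊆ A j ∨ ∀ z ∈ A (n + 1), z ∉ A j := by
    intro j hj
    have h1 : ¬ A j ⊆ A (n + 1) := fun hh => hns (h.sub_zero j (by omega) hh)
    by_contra! h2
    obtain ⟨h2, z, hz1, hz2⟩ := h2
    have := (h j (n + 1) (by omega) (by omega)).1
      ⟨⟨z, Finset.mem_inter.2 ⟨hz2, hz1⟩⟩, h1, h2⟩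
    omega
  have hne : A (n - 1) ≠ A (n + 1) := by
    intro he
    rw [he] at hpp
    have := (h (n - 2) (n + 1) (by omega) (by omega)).1 hpp
    omega
  obtain ⟨⟨x, hx1, hx2⟩, -, ⟨y, hy1, hy2⟩⟩ := (overlaps_iff _ _).1 hlast
  have hxy : x ≠ y := by rintro rfl; exact hy2 hx1
  have ht : ∀ j, j < n → (x ∈ A j ↔ y ∈ A j) := by
    intro j hj
    rcases hdich j hj with h1 | h1
    · exact iff_of_true (h1 hx2) (h1 hy1)
    · exact iff_of_false (h1 x hx2) (h1 y hy1)
  by_cases hy : Overlaps ((A (n - 1)).erase y) ((A n).erase y)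
  · exact ⟨y, hy1, h.erase hxy.symm (fun j hj => (ht j hj).symm) hy⟩
  by_cases hx : Overlaps ((A (n - 1)).erase x) ((A n).erase x)
  · exact ⟨x, hx2, h.erase hxy ht hx⟩
  exfalso
  have hd := hdich (n - 1) (by omega)
  generalize A (n - 1) = B at *
  generalize A n = C at *
  generalize A (n + 1) = D at *
  rw [overlaps_iff] at hprev hx hy
  obtain ⟨⟨a, ha1, ha2⟩, ⟨b, hb1, hb2⟩, ⟨c, hc1, hc2⟩⟩ := hprev
  simp only [Finset.mem_erase] at hx hy
  -- B \ C = {y}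
  have hBC : ∀ t, t ∈ B → t ∉ C → t = y := by
    intro t ht1 ht2
    by_contra hty
    apply hy
    refine ⟨⟨a, ?_⟩, ⟨t, ?_⟩, ⟨c, ?_⟩⟩ <;> grind
  have hyB : y ∈ B := by rw [← hBC b hb1 hb2]; exact hb1
  have hDB : D ⊆ B := by
    rcases hd with h1 | h1
    · exact h1
    · exact absurd hyB (h1 y hy1)
  have hxB := hDB hx2
  have hBC2 : ∀ t, t ∈ B → t ∈ C → t = x := by
    intro t ht1 ht2
    by_contra htx
    apply hx
    refine ⟨⟨t, ?_⟩, ⟨y, ?_⟩, ⟨c, ?_⟩⟩ <;> grind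
  apply hne
  apply Finset.Subset.antisymm _ hDB
  intro t ht1
  by_cases htC : t ∈ C
  · rw [hBC2 t ht1 htC]; exact hx2
  · rw [hBC t ht1 htC]; exact hy1

theorem PRep.card_le (n : ℕ) : ∀ (A : ℕ → Finset ℕ) (U : Finset ℕ), PRep (n + 3) A →
    (∀ i, i < n + 3 → A i ⊆ U) → n + 3 ≤ U.card := by
  induction n with
  | zero =>
    intro A U h hU
    exact ((h 0 1 (by omega) (by omega)).2 rfl).three_le (hU 0 (by omega)) (hU 1 (by omega))
  | succ n ih =>
    have key : ∀ (A : ℕ → Finset ℕ) (U : Finset ℕ), PRep (n + 4) A →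
        (∀ i, i < n + 4 → A i ⊆ U) → ¬ A 0 ⊆ A (n + 3) → n + 4 ≤ U.card := by
      intro A U h hU hns
      obtain ⟨x, hx, h1⟩ := PRep.step (n := n + 2) (by omega) h hns
      have h2 := ih _ (U.erase x) h1 (fun i hi => Finset.erase_subset_erase _ (hU i (by omega)))
      have hxU : x ∈ U := hU _ (by omega) hx
      have := Finset.card_erase_add_one hxU
      omega
    intro A U h hU
    by_cases h0 : A 0 ⊆ A (n + 3)
    · refine key _ U h.rev (fun i hi => hU _ (by omega)) ?_
      intro h1
      have h2 : A (n + 3) ⊆ A 0 := by simpa using h1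
      have h3 := Finset.Subset.antisymm h0 h2
      have h4 := (h 0 1 (by omega) (by omega)).2 rfl
      rw [h3] at h4
      have := (h 1 (n + 3) (by omega) (by omega)).1 h4.symm'
      omega
    · exact key A U h hU h0

theorem ov_range_range (i j : ℕ) : ¬ Overlaps (Finset.range i) (Finset.range j) := by
  rintro ⟨-, h1, h2⟩
  rcases le_total i j with h | h
  · exact h1 (Finset.range_subset_range.2 h)
  · exact h2 (Finset.range_subset_range.2 h)

theorem ov_range_pair (i j : ℕ) :
    Overlaps (Finset.range (i + 2)) {j + 1, j + 2} ↔ i = j := by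
  rw [overlaps_iff]
  simp only [Finset.mem_range, Finset.mem_insert, Finset.mem_singleton]
  constructor
  · rintro ⟨⟨a, ha⟩, -, ⟨c, hc⟩⟩
    omega
  · rintro rfl
    exact ⟨⟨i + 1, by omega⟩, ⟨0, by omega⟩, ⟨i + 2, by omega⟩⟩

theorem ov_pair_pair (i j : ℕ) :
    Overlaps {i + 1, i + 2} {j + 1, j + 2} ↔ i + 1 = j ∨ j + 1 = i := by
  rw [overlaps_iff]
  simp only [Finset.mem_insert, Finset.mem_singleton]
  constructor
  · rintro ⟨⟨a, ha⟩, ⟨b, hb⟩, -⟩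
    omega
  · rintro (rfl | rfl)
    · exact ⟨⟨i + 2, by omega⟩, ⟨i + 1, by omega⟩, ⟨i + 3, by omega⟩⟩
    · exact ⟨⟨j + 2, by omega⟩, ⟨j + 3, by omega⟩, ⟨j + 1, by omega⟩⟩

theorem ov_comm (A B : Finset ℕ) : Overlaps A B ↔ Overlaps B A :=
  ⟨Overlaps.symm', Overlaps.symm'⟩

theorem upper_aux {V : Type*} [Fintype V] (G : SimpleGraph V) (P : V → Prop) (k : ℕ)
    (idx : V → ℕ) (hk : ∀ v, idx v < k)
    (h1 : ∀ u v, P u → P v → (G.Adj u v ↔ idx u + 1 = idx v ∨ idx v + 1 = idx u))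
    (h2 : ∀ u v, ¬ P u → P v → (G.Adj u v ↔ idx u = idx v))
    (h3 : ∀ u v, ¬ P u → ¬ P v → ¬ G.Adj u v) :
    ∃ S : V → Finset ℕ, IsOverlapRep G S ∧ (⋃ v, (S v : Set ℕ)).ncard ≤ k + 2 := by
  classical
  refine ⟨fun v => if P v then {idx v + 1, idx v + 2} else Finset.range (idx v + 2),
    ⟨?_, ?_⟩, ?_⟩
  · intro v
    dsimp only
    split_ifs
    · exact ⟨_, Finset.mem_insert_self _ _⟩
    · exact ⟨0, by simp⟩
  · intro u v
    by_cases hu : P u <;> by_cases hv : P v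
    · simp only [hu, hv, if_true, ov_pair_pair, h1 u v hu hv]
    · simp only [hu, hv, if_true, if_false]
      rw [ov_comm, ov_range_pair, G.adj_comm, h2 v u hv hu]
    · simp only [hu, hv, if_true, if_false, ov_range_pair, h2 u v hu hv]
    · simp only [hu, hv, if_false, ov_range_range, h3 u v hu hv]
  · have hsub : (⋃ v, ((if P v then {idx v + 1, idx v + 2} else Finset.range (idx v + 2) :
        Finset ℕ) : Set ℕ)) ⊆ (Finset.range (k + 2) : Set ℕ) := by
      intro x hx
      simp only [Set.mem_iUnion, Finset.mem_coe] at hx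
      obtain ⟨v, hv⟩ := hx
      have := hk v
      simp only [Finset.mem_coe, Finset.mem_range]
      split_ifs at hv
      · simp only [Finset.mem_insert, Finset.mem_singleton] at hv
        omega
      · simp only [Finset.mem_range] at hv
        omega
    have := Set.ncard_le_ncard hsub (Finset.finite_toSet _)
    rwa [Set.ncard_coe_finset, Finset.card_range] at this

theorem closed_pair {V : Type*} (G : SimpleGraph V) (hc : G.Preconnected) (C : V → Prop) (v : V)
    (hv : C v) (hcl : ∀ a b, C a → G.Adj a b → C b) (s : V) : C s := by
  obtain ⟨p⟩ := hc v s
  induction p with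
  | nil => exact hv
  | cons h p ih => exact ih (hcl _ _ hv h)

/-- nonspine neighbours are unique -/
theorem leaf_unique {V : Type*} [Fintype V] (G : SimpleGraph V) [DecidableRel G.Adj] {v a b : V}
    (hv : ¬ 2 ≤ G.degree v) (ha : G.Adj v a) (hb : G.Adj v b) : a = b := by
  by_contra hab
  apply hv
  classical
  rw [← G.card_neighborFinset_eq_degree, ← Finset.card_pair hab]
  apply Finset.card_le_card
  intro t ht
  simp only [Finset.mem_insert, Finset.mem_singleton] at ht
  rw [SimpleGraph.mem_neighborFinset]
  rcases ht with rfl | rfl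
  · exact ha
  · exact hb

theorem exists_other {V : Type*} [Fintype V] (G : SimpleGraph V) [DecidableRel G.Adj] {v : V}
    (hv : 2 ≤ G.degree v) (a : V) : ∃ b, G.Adj v b ∧ b ≠ a := by
  classical
  rw [← G.card_neighborFinset_eq_degree] at hv
  obtain ⟨b, hb, hba⟩ := Finset.exists_mem_ne (s := G.neighborFinset v) (by omega) a
  exact ⟨b, (G.mem_neighborFinset _ _).1 hb, hba⟩

/-- A caterpillar is a tree whose non-leaf vertices (vertices of degree at least two)
induce a path; if the spine has `k ≥ 1` vertices then the overlap number is `k + 2`. -/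
theorem overlapNumber_caterpillar {V : Type*} [Fintype V] [DecidableEq V]
    (G : SimpleGraph V) [DecidableRel G.Adj] (hT : G.IsTree) (k : ℕ) (hk : 1 ≤ k)
    (hspine : Nonempty ((G.induce {v | 2 ≤ G.degree v}) ≃g SimpleGraph.pathGraph k)) :
    overlapNumber G = k + 2 := by
  obtain ⟨e⟩ := hspine
  have hconn := hT.1.preconnected
  -- spine vertices
  obtain ⟨sp, hsp⟩ : ∃ sp : Fin k → V, ∀ i, sp i = (e.symm i : V) := ⟨fun i => e.symm i, fun _ => rfl⟩
  have hdeg : ∀ i, 2 ≤ G.degree (sp i) := fun i => by rw [hsp]; exact (e.symm i).2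
  have hspadj : ∀ i j, G.Adj (sp i) (sp j) ↔ (i : ℕ) + 1 = j ∨ (j : ℕ) + 1 = i := by
    intro i j
    have h1 : (G.induce {v | 2 ≤ G.degree v}).Adj (e.symm i) (e.symm j) ↔ _ := e.symm.map_adj_iff
    rw [SimpleGraph.pathGraph_adj] at h1
    rw [hsp, hsp]
    exact h1
  have hspinj : Function.Injective sp := by
    intro i j hij
    rw [hsp, hsp] at hij
    exact e.symm.injective (Subtype.ext hij)
  have hspsurj : ∀ v, 2 ≤ G.degree v → ∃ i, sp i = v := fun v hv =>
    ⟨e ⟨v, hv⟩, by rw [hsp]; simp⟩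
  clear hsp
  let s0 : Fin k := ⟨0, by omega⟩
  let s1 : Fin k := ⟨k - 1, by omega⟩
  have hleaf : ∀ v, ¬ 2 ≤ G.degree v → ∃ i, G.Adj v (sp i) := by
    intro v hv
    by_contra! hno
    have hno' : ∀ w, G.Adj v w → ¬ 2 ≤ G.degree w := by
      intro w hw h2
      obtain ⟨i, rfl⟩ := hspsurj w h2
      exact hno i hw
    have := closed_pair G hconn (fun t => t = v ∨ G.Adj v t) v (Or.inl rfl) (by
      rintro a b (rfl | ha) hab
      · exact Or.inr hab
      · exact Or.inl (leaf_unique G (hno' a ha) hab ha.symm)) (sp s0)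
    rcases this with h | h
    · exact hv (h ▸ hdeg s0)
    · exact hno _ h
  have hidx : ∀ v, ∃ i, if 2 ≤ G.degree v then sp i = v else G.Adj v (sp i) := by
    intro v
    by_cases hv : 2 ≤ G.degree v
    · simpa [hv] using hspsurj v hv
    · simpa [hv] using hleaf v hv
  choose idx hidx using hidx
  have hi1 : ∀ v, 2 ≤ G.degree v → sp (idx v) = v := fun v hv => by
    have := hidx v; rwa [if_pos hv] at this
  have hi2 : ∀ v, ¬ 2 ≤ G.degree v → G.Adj v (sp (idx v)) := fun v hv => by
    have := hidx v; rwa [if_neg hv] at this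
  have hupper : ∃ S : V → Finset ℕ, IsOverlapRep G S ∧
      (⋃ v, (S v : Set ℕ)).ncard ≤ k + 2 := by
    refine upper_aux G (fun v => 2 ≤ G.degree v) k (fun v => idx v) (fun v => (idx v).2) ?_ ?_ ?_
    · intro u v hu hv
      have := hspadj (idx u) (idx v)
      rwa [hi1 u hu, hi1 v hv] at this
    · intro u v hu hv
      constructor
      · intro h
        have h1 := leaf_unique G hu (hi2 u hu) h
        rw [← hi1 v hv] at h1
        rw [hspinj h1]
      · intro h
        have h1 : idx u = idx v := Fin.ext h
        have h2 := hi2 u hu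
        rwa [h1, hi1 v hv] at h2
    · intro u v hu hv h
      have h1 := leaf_unique G hu (hi2 u hu) h
      exact hv (h1 ▸ hdeg _)
  have hlower : ∀ S : V → Finset ℕ, IsOverlapRep G S →
      k + 2 ≤ (⋃ v, (S v : Set ℕ)).ncard := by
    intro S hS
    have hU : (⋃ v, (S v : Set ℕ)) = ((Finset.univ.biUnion S : Finset ℕ) : Set ℕ) := by
      simp
    rw [hU, Set.ncard_coe_finset]
    have hsub : ∀ v, S v ⊆ Finset.univ.biUnion S := fun v =>
      Finset.subset_biUnion_of_mem S (Finset.mem_univ v)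
    by_cases hk1 : k = 1
    · subst hk1
      obtain ⟨b, hb, -⟩ := exists_other G (hdeg s0) (sp s0)
      exact ((hS.2 _ _).1 hb).three_le (hsub _) (hsub _)
    obtain ⟨a, ha, ha'⟩ := exists_other G (hdeg s0) (sp ⟨1, by omega⟩)
    obtain ⟨b, hb, hb'⟩ := exists_other G (hdeg s1) (sp ⟨k - 2, by omega⟩)
    have haL : ¬ 2 ≤ G.degree a := by
      intro h
      obtain ⟨i, rfl⟩ := hspsurj a h
      have h1 := (hspadj _ _).1 ha
      apply ha'
      congr 1
      apply Fin.ext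
      simp only [s0] at h1 ⊢
      omega
    have hbL : ¬ 2 ≤ G.degree b := by
      intro h
      obtain ⟨i, rfl⟩ := hspsurj b h
      have h1 := (hspadj _ _).1 hb
      apply hb'
      congr 1
      apply Fin.ext
      have := i.2
      simp only [s1] at h1 ⊢
      omega
    have haA : ∀ w, G.Adj a w ↔ w = sp s0 := fun w =>
      ⟨fun h => leaf_unique G haL h ha.symm, fun h => h ▸ ha.symm⟩
    have hbA : ∀ w, G.Adj b w ↔ w = sp s1 := fun w =>
      ⟨fun h => leaf_unique G hbL h hb.symm, fun h => h ▸ hb.symm⟩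
    let p : ℕ → V := fun i => if i = 0 then a else if h : i - 1 < k then sp ⟨i - 1, h⟩ else b
    have hp0 : p 0 = a := rfl
    have hpm : ∀ i (h : i < k), p (i + 1) = sp ⟨i, h⟩ := by
      intro i h
      simp [p, h]
    have hpl : p (k + 1) = b := by simp [p]
    have hprep : PRep (k + 2) (fun i => S (p i)) := by
      intro i j hij hj
      dsimp only
      rw [← hS.2]
      obtain ⟨j, rfl⟩ : ∃ j', j = j' + 1 := ⟨j - 1, by omega⟩
      rcases Nat.eq_zero_or_pos i with rfl | hi
      · rw [hp0, haA]
        by_cases hjk : j < k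
        · rw [hpm j hjk, hspinj.eq_iff, Fin.ext_iff]
          simp only [s0]
          omega
        · have : j = k := by omega
          subst this
          rw [hpl]
          refine iff_of_false ?_ (by omega)
          intro h
          exact hbL (h ▸ hdeg _)
      · obtain ⟨i, rfl⟩ : ∃ i', i = i' + 1 := ⟨i - 1, by omega⟩
        rw [hpm i (by omega)]
        by_cases hjk : j < k
        · rw [hpm j hjk, hspadj]
          simp only
          omega
        · have : j = k := by omega
          subst this
          rw [hpl, G.adj_comm, hbA, hspinj.eq_iff, Fin.ext_iff]
          simp only [s1]
          omega
    obtain ⟨m, rfl⟩ : ∃ m, k = m + 1 := ⟨k - 1, by omega⟩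
    exact PRep.card_le m _ _ hprep (fun i _ => hsub _)
  obtain ⟨S, hS, hc⟩ := hupper
  apply le_antisymm
  · refine le_trans ?_ hc
    exact Nat.sInf_le ⟨S, hS, rfl⟩
  · refine le_csInf ⟨_, S, hS, rfl⟩ ?_
    rintro n ⟨S', hS', rfl⟩
    exact hlower S' hS'
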